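/- Let K be a finite extension of ℚ(t₁,…,tₙ) with ring of integers O_K (the integral closure of ℤ[t₁,…,tₙ] in K), and suppose K = ℚ(t₁,…,tₙ)(μ) and O_K = ℤ[t₁,…,tₙ][μ] for some μ. If Spec(O_K) → Spec(ℤ[t₁,…,tₙ]) is unramified (for every prime P of O_K over p of ℤ[t₁,…,tₙ], P = p·O_K locally and the residue extension is finite separable), then μ ∈ ℤ[t₁,…,tₙ] and hence K = ℚ(t₁,…,tₙ). -/

import Mathlib

section

open Polynomial

/-- If `R[X]/(f)` is formally unramified over `R`, then an `R`-algebra in which `f` and `f'` have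
a common root is trivial. -/
theorem AdjoinRoot.subsingleton_of_formallyUnramified {R Q : Type*} [CommRing R] [CommRing Q]
    [Algebra R Q] (f : R[X]) [Algebra.FormallyUnramified R (AdjoinRoot f)] {x : Q}
    (hf : aeval x f = 0) (hf' : aeval x (derivative f) = 0) : Subsingleton Q := by
  let inl : Q →ₐ[R] DualNumber Q := TrivSqZeroExt.inlAlgHom R Q Q
  have h₁ : f.eval₂ (Algebra.ofId R (DualNumber Q)) (inl x) = 0 := by
    change aeval (inl x) f = 0
    rw [aeval_algHom_apply, hf, map_zero]
  have h₂ : f.eval₂ (Algebra.ofId R (DualNumber Q)) (inl x + DualNumber.eps) = 0 := by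
    change aeval (inl x + DualNumber.eps) f = 0
    have heps : (DualNumber.eps : DualNumber Q) ^ 2 = 0 := by rw [sq, DualNumber.eps_mul_eps]
    have htaylor := aeval_add_of_sq_eq_zero f (inl x) DualNumber.eps heps
    rw [aeval_algHom_apply, aeval_algHom_apply, hf, hf', map_zero, zero_mul, add_zero] at htaylor
    exact htaylor
  have key : AdjoinRoot.liftAlgHom f _ _ h₁ = AdjoinRoot.liftAlgHom f _ _ h₂ := by
    refine Algebra.FormallyUnramified.lift_unique' (TrivSqZeroExt.fstHom R Q Q) ⟨2, ?_⟩ _ _ ?_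
    · rw [Ideal.zero_eq_bot, eq_bot_iff, sq, Ideal.mul_le]
      intro a ha b hb
      rw [RingHom.mem_ker] at ha hb
      change a.fst = 0 at ha
      change b.fst = 0 at hb
      rw [Ideal.mem_bot]
      ext <;> simp [ha, hb]
    · apply AdjoinRoot.algHom_ext
      simp [inl]
  have h := congrArg TrivSqZeroExt.snd (DFunLike.congr_fun key (AdjoinRoot.root f))
  rw [AdjoinRoot.liftAlgHom_root, AdjoinRoot.liftAlgHom_root] at h
  exact subsingleton_of_zero_eq_one (by simpa [inl] using h)

/-- If `R[X]/(f)` is formally unramified over `R`, then `f` and `f'` generate the unit ideal. -/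
theorem AdjoinRoot.isCoprime_derivative_of_formallyUnramified {R : Type*} [CommRing R] (f : R[X])
    [Algebra.FormallyUnramified R (AdjoinRoot f)] : IsCoprime f (derivative f) := by
  let I : Ideal R[X] := Ideal.span {f, derivative f}
  let x : R[X] ⧸ I := Ideal.Quotient.mkₐ R I X
  have haeval (p : R[X]) (hp : p ∈ I) : aeval x p = 0 := by
    rw [aeval_algHom_apply, aeval_X_left_apply]
    exact Ideal.Quotient.eq_zero_iff_mem.mpr hp
  have hsub := subsingleton_of_formallyUnramified f (haeval f (Ideal.subset_span (by simp)))
    (haeval _ (Ideal.subset_span (by simp)))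
  have h1 : (1 : R[X]) ∈ Ideal.span {f, derivative f} :=
    (Ideal.eq_top_iff_one _).mp (Ideal.Quotient.subsingleton_iff.mp hsub)
  exact Ideal.mem_span_pair.mp h1

open NumberField in
/-- A number field generated by a root of an integral polynomial that is coprime to its derivative
over `ℤ` is `ℚ`. -/
theorem NumberField.finrank_eq_one_of_isCoprime_derivative {L : Type*} [Field L] [NumberField L]
    {f : ℤ[X]} (hf : IsCoprime f (derivative f)) {α : 𝓞 L} (hα : aeval α f = 0)
    (hgen : Algebra.adjoin ℚ {algebraMap (𝓞 L) L α} = ⊤) : Module.finrank ℚ L = 1 := by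
  have hint : IsIntegral ℤ α := Algebra.IsIntegral.isIntegral α
  have hmem := aeval_derivative_mem_differentIdeal ℤ ℚ L α hgen
  obtain ⟨q, rfl⟩ := minpoly.isIntegrallyClosed_dvd hint hα
  obtain ⟨u, v, huv⟩ := hf
  have hunit : IsUnit (aeval α (derivative (minpoly ℤ α))) := by
    have := congrArg (aeval α) huv
    simp only [derivative_mul, map_add, map_mul, minpoly.aeval, map_one] at this
    exact IsUnit.of_mul_eq_one (aeval α v * aeval α q) (by linear_combination this)
  have htop := Ideal.eq_top_of_isUnit_mem _ hmem hunit
  have hdisc := NumberField.absNorm_differentIdeal L (𝓞 L)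
  rw [htop, Ideal.absNorm_top] at hdisc
  by_contra hne
  have := NumberField.abs_discr_gt_two (K := L)
    (lt_of_le_of_ne Module.finrank_pos (Ne.symm hne))
  rw [Int.abs_eq_natAbs, ← hdisc] at this
  norm_num at this

/-- The complex roots of a monic integral polynomial coprime to its derivative over `ℤ` are
integers. -/
theorem Polynomial.exists_intCast_eq_of_isCoprime_derivative {f : ℤ[X]} (hmonic : f.Monic)
    (hf : IsCoprime f (derivative f)) {z : ℂ} (hz : aeval z f = 0) : ∃ r : ℤ, (r : ℂ) = z := by
  have hzint : IsIntegral ℤ z := ⟨f, hmonic, hz⟩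
  have hzQ : IsIntegral ℚ z := hzint.tower_top
  have := IntermediateField.adjoin.finiteDimensional hzQ
  have : NumberField (IntermediateField.adjoin ℚ {z}) := ⟨⟩
  let β := IntermediateField.AdjoinSimple.gen ℚ z
  have hβ : aeval β f = 0 := by
    apply (algebraMap (IntermediateField.adjoin ℚ {z}) ℂ).injective
    rw [← aeval_algebraMap_apply, map_zero]
    exact hz
  let α : NumberField.RingOfIntegers (IntermediateField.adjoin ℚ {z}) := ⟨β, f, hmonic, hβ⟩
  have hα : aeval α f = 0 := by
    apply NumberField.RingOfIntegers.coe_injective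
    rw [← aeval_algebraMap_apply, map_zero]
    exact hβ
  have hgen : Algebra.adjoin ℚ {algebraMap _ (IntermediateField.adjoin ℚ {z}) α} = ⊤ := by
    have := (IntermediateField.adjoin.powerBasis hzQ).adjoin_gen_eq_top
    rwa [IntermediateField.adjoin.powerBasis_gen] at this
  have h1 := NumberField.finrank_eq_one_of_isCoprime_derivative hf hα hgen
  rw [IntermediateField.finrank_adjoin_simple_eq_one_iff, IntermediateField.mem_bot] at h1
  obtain ⟨r, rfl⟩ := h1
  have hr : IsIntegral ℤ r := (isIntegral_algebraMap_iff (algebraMap ℚ ℂ).injective).mp hzint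
  obtain ⟨k, rfl⟩ := IsIntegrallyClosed.isIntegral_iff.mp hr
  exact ⟨k, by simp⟩

/-- Distinct roots of a polynomial coprime to its derivative differ by a unit. -/
theorem Polynomial.isUnit_sub_of_isCoprime_derivative {R : Type*} [CommRing R] [IsDomain R]
    {f : R[X]} (hf : IsCoprime f (derivative f)) {r s : R} (hr : f.IsRoot r) (hs : f.IsRoot s)
    (hrs : r ≠ s) : IsUnit (r - s) := by
  obtain ⟨g, rfl⟩ := dvd_iff_isRoot.mpr hr
  have hg : g.IsRoot s := by
    rw [IsRoot, eval_mul] at hs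
    refine (mul_eq_zero.mp hs).resolve_left ?_
    simpa [sub_eq_zero] using hrs.symm
  obtain ⟨q, rfl⟩ := dvd_iff_isRoot.mpr hg
  obtain ⟨u, v, huv⟩ := hf
  have := congrArg (eval r) huv
  simp only [derivative_mul, derivative_X_sub_C, eval_add, eval_mul, eval_sub, eval_X, eval_C,
    eval_one] at this
  exact IsUnit.of_mul_eq_one (eval r v * eval r q) (by linear_combination this)

/-- A monic integral polynomial coprime to its derivative over `ℤ` has degree at most two. -/
theorem Polynomial.natDegree_le_two_of_isCoprime_derivative {f : ℤ[X]} (hmonic : f.Monic)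
    (hf : IsCoprime f (derivative f)) : f.natDegree ≤ 2 := by
  have hsep : (f.map (algebraMap ℤ ℂ)).Separable := Separable.map (hf : f.Separable)
  have hcard := card_rootSet_eq_natDegree (K := ℂ) (p := f.map (algebraMap ℤ ℂ)) hsep
    (IsAlgClosed.splits _)
  rw [hmonic.natDegree_map] at hcard
  by_contra! hlt
  rw [← hcard, Fintype.two_lt_card_iff] at hlt
  have hroot (z : (f.map (algebraMap ℤ ℂ)).rootSet ℂ) : ∃ r : ℤ, (r : ℂ) = z ∧ f.IsRoot r := by
    have hz : aeval (z : ℂ) f = 0 := by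
      rw [← aeval_map_algebraMap ℂ]
      exact aeval_eq_zero_of_mem_rootSet z.2
    obtain ⟨r, hr⟩ := exists_intCast_eq_of_isCoprime_derivative hmonic hf hz
    refine ⟨r, hr, ?_⟩
    rw [← hr, ← eq_intCast (algebraMap ℤ ℂ), aeval_algebraMap_apply] at hz
    simpa using hz
  obtain ⟨a, b, c, hab, hac, hbc⟩ := hlt
  obtain ⟨r, hr, hr0⟩ := hroot a
  obtain ⟨s, hs, hs0⟩ := hroot b
  obtain ⟨t, ht, ht0⟩ := hroot c
  have hrs : r ≠ s := by rintro rfl; exact hab (Subtype.ext (hr.symm.trans hs))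
  have hrt : r ≠ t := by rintro rfl; exact hac (Subtype.ext (hr.symm.trans ht))
  have hst : s ≠ t := by rintro rfl; exact hbc (Subtype.ext (hs.symm.trans ht))
  have h₁ := Int.isUnit_iff.mp (isUnit_sub_of_isCoprime_derivative hf hr0 hs0 hrs)
  have h₂ := Int.isUnit_iff.mp (isUnit_sub_of_isCoprime_derivative hf hr0 ht0 hrt)
  have h₃ := Int.isUnit_iff.mp (isUnit_sub_of_isCoprime_derivative hf hs0 ht0 hst)
  omega

/-- The discriminant of a monic quadratic polynomial coprime to its derivative is a unit. -/
theorem Polynomial.isUnit_discrim_of_isCoprime_derivative {R : Type*} [CommRing R] [IsDomain R]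
    {b c : R}
    (hf : IsCoprime (X ^ 2 + C b * X + C c) (derivative (X ^ 2 + C b * X + C c))) :
    IsUnit (b ^ 2 - 4 * c) := by
  set f : R[X] := X ^ 2 + C b * X + C c with hfdef
  have hmonic : f.Monic := by rw [hfdef]; monicity!
  have hdeg : f.degree ≠ 0 := by
    have : f.degree = 2 := by rw [hfdef]; compute_degree!
    simp [this]
  have := hmonic.free_adjoinRoot
  have := hmonic.finite_adjoinRoot
  have := AdjoinRoot.nontrivial f hdeg
  apply isUnit_of_map_unit (algebraMap R (AdjoinRoot f))
  obtain ⟨u, v, huv⟩ := hf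
  have hroot : aeval (AdjoinRoot.root f) f = 0 := by simp
  have h := congrArg (aeval (AdjoinRoot.root f)) huv
  rw [map_add, map_mul, map_mul, hroot, mul_zero, zero_add, map_one, mul_comm] at h
  have hsq : aeval (AdjoinRoot.root f) (derivative f) ^ 2
      = algebraMap R (AdjoinRoot f) (b ^ 2 - 4 * c) := by
    have hpoly : derivative f ^ 2 = 4 * f + C (b ^ 2 - 4 * c) := by
      simp only [hfdef, derivative_add, derivative_X_pow, derivative_C_mul, derivative_X,
        derivative_C, map_sub, map_mul, map_pow, map_ofNat]
      push_cast
      simp only [map_ofNat]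
      ring
    rw [← map_pow, hpoly, map_add, map_mul, hroot, mul_zero, zero_add, aeval_C]
  rw [← hsq]
  exact (IsUnit.of_mul_eq_one _ h).pow 2

/-- A monic polynomial coprime to its derivative over a ring with a homomorphism to `ℤ` has degree
at most two. -/
theorem Polynomial.natDegree_le_two_of_ringHom_int {R : Type*} [CommRing R] (φ : R →+* ℤ)
    {f : R[X]} (hmonic : f.Monic) (hf : IsCoprime f (derivative f)) : f.natDegree ≤ 2 := by
  have h := hf.map (mapRingHom φ)
  rw [coe_mapRingHom, ← derivative_map] at h
  rw [← hmonic.natDegree_map φ]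
  exact natDegree_le_two_of_isCoprime_derivative (hmonic.map _) h

/-- A monic quadratic polynomial over `ℤ[t₁,…,tₙ]` coprime to its derivative has discriminant
one. -/
theorem Polynomial.discrim_eq_one_of_isCoprime_derivative {σ : Type*} {b c : MvPolynomial σ ℤ}
    (hf : IsCoprime (X ^ 2 + C b * X + C c) (derivative (X ^ 2 + C b * X + C c))) :
    b ^ 2 - 4 * c = 1 := by
  obtain ⟨r, hr, h⟩ := MvPolynomial.isUnit_iff_eq_C_of_isReduced.mp
    (isUnit_discrim_of_isCoprime_derivative hf)
  rcases Int.isUnit_iff.mp hr with rfl | rfl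
  · rw [h, map_one]
  · have h0 := congrArg MvPolynomial.constantCoeff h
    simp only [map_sub, map_pow, map_mul, map_ofNat, MvPolynomial.constantCoeff_C] at h0
    have h4 := congrArg (Int.cast : ℤ → ZMod 4) h0
    push_cast at h4
    rw [show (4 : ZMod 4) = 0 from rfl, zero_mul, sub_zero] at h4
    have hsq : ∀ x : ZMod 4, x ^ 2 ≠ -1 := by decide
    exact absurd h4 (hsq _)

end

open MvPolynomial in
/-- Let `K = ℚ(t₁,…,tₙ)(μ)` be a finite extension of `ℚ(t₁,…,tₙ)` whose ring
of integers (the integral closure of `ℤ[t₁,…,tₙ]` in `K`) is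
`ℤ[t₁,…,tₙ][μ]`.  If `Spec O_K → Spec ℤ[t₁,…,tₙ]` is unramified (the Kähler
differentials vanish) and `ℚ` has no nontrivial everywhere-unramified
extension, then `μ ∈ ℤ[t₁,…,tₙ]` and hence `K = ℚ(t₁,…,tₙ)`. -/
theorem stmt16 (n : ℕ) (K : Type*) [Field K]
    [Algebra (FractionRing (MvPolynomial (Fin n) ℤ)) K]
    [FiniteDimensional (FractionRing (MvPolynomial (Fin n) ℤ)) K]
    [Algebra (MvPolynomial (Fin n) ℤ) K]
    [IsScalarTower (MvPolynomial (Fin n) ℤ)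
      (FractionRing (MvPolynomial (Fin n) ℤ)) K]
    (μ : K)
    (hK : Algebra.adjoin (FractionRing (MvPolynomial (Fin n) ℤ)) ({μ} : Set K) = ⊤)
    (hOK : integralClosure (MvPolynomial (Fin n) ℤ) K
      = Algebra.adjoin (MvPolynomial (Fin n) ℤ) ({μ} : Set K))
    (hunram : Subsingleton
      (Ω[(integralClosure (MvPolynomial (Fin n) ℤ) K)⁄(MvPolynomial (Fin n) ℤ)]))
    (hHM : ∀ (L : Type) [Field L] [NumberField L],
      (∀ p : ℕ, p.Prime →
        Squarefree (Ideal.span {(p : NumberField.RingOfIntegers L)} :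
          Ideal (NumberField.RingOfIntegers L))) →
      Module.finrank ℚ L = 1) :
    (∃ r : MvPolynomial (Fin n) ℤ,
        algebraMap (MvPolynomial (Fin n) ℤ) K r = μ)
      ∧ Module.finrank (FractionRing (MvPolynomial (Fin n) ℤ)) K = 1 := by
  have hμint : IsIntegral (MvPolynomial (Fin n) ℤ) μ := by
    change μ ∈ integralClosure (MvPolynomial (Fin n) ℤ) K
    rw [hOK]
    exact Algebra.self_mem_adjoin_singleton _ μ
  have : FaithfulSMul (MvPolynomial (Fin n) ℤ) K :=
    FaithfulSMul.trans (MvPolynomial (Fin n) ℤ) (FractionRing (MvPolynomial (Fin n) ℤ)) K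
  have hminpoly := minpoly.isIntegrallyClosed_eq_field_fractions'
    (FractionRing (MvPolynomial (Fin n) ℤ)) hμint
  have hmonic := minpoly.monic hμint
  suffices hμ : μ ∈ (algebraMap (FractionRing (MvPolynomial (Fin n) ℤ)) K).range by
    obtain ⟨y, rfl⟩ := hμ
    constructor
    · obtain ⟨r, rfl⟩ := IsIntegrallyClosed.isIntegral_iff.mp
        ((isIntegral_algebraMap_iff
          (algebraMap (FractionRing (MvPolynomial (Fin n) ℤ)) K).injective).mp hμint)
      exact ⟨r, IsScalarTower.algebraMap_apply _ _ _ _⟩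
    · rw [← Subalgebra.bot_eq_top_iff_finrank_eq_one, ← hK, eq_comm, eq_bot_iff,
        Algebra.adjoin_le_iff, Set.singleton_subset_iff]
      exact Subalgebra.algebraMap_mem _ y
  have : Algebra.FormallyUnramified (MvPolynomial (Fin n) ℤ)
      (integralClosure (MvPolynomial (Fin n) ℤ) K) := ⟨hunram⟩
  have : Algebra.FormallyUnramified (MvPolynomial (Fin n) ℤ)
      (AdjoinRoot (minpoly (MvPolynomial (Fin n) ℤ) μ)) :=
    Algebra.FormallyUnramified.of_equiv
      ((Subalgebra.equivOfEq _ _ hOK).trans (minpoly.equivAdjoin hμint).symm)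
  have hcop := AdjoinRoot.isCoprime_derivative_of_formallyUnramified
    (minpoly (MvPolynomial (Fin n) ℤ) μ)
  have hle := Polynomial.natDegree_le_two_of_ringHom_int constantCoeff hmonic hcop
  have hpos := minpoly.natDegree_pos hμint
  obtain hdeg | hdeg : (minpoly (MvPolynomial (Fin n) ℤ) μ).natDegree = 1 ∨
      (minpoly (MvPolynomial (Fin n) ℤ) μ).natDegree = 2 := by omega
  · rwa [← minpoly.natDegree_eq_one_iff, hminpoly, hmonic.natDegree_map]
  · set f := minpoly (MvPolynomial (Fin n) ℤ) μ with hf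
    have hquad : f = Polynomial.X ^ 2 + Polynomial.C (f.coeff 1) * Polynomial.X
        + Polynomial.C (f.coeff 0) := by
      conv_lhs => rw [hmonic.as_sum, hdeg]
      simp [Finset.sum_range_succ]
      ring
    rw [hquad] at hcop
    have hdisc := congrArg (algebraMap _ K)
      (Polynomial.discrim_eq_one_of_isCoprime_derivative hcop)
    have hroot : Polynomial.aeval μ f = 0 := minpoly.aeval _ _
    rw [hquad] at hroot
    simp only [map_sub, map_pow, map_mul, map_ofNat, map_one, map_add, Polynomial.aeval_X,
      Polynomial.aeval_C] at hdisc hroot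
    have : CharZero K := charZero_of_injective_algebraMap
      (FaithfulSMul.algebraMap_injective (MvPolynomial (Fin n) ℤ) K)
    have hsq : (2 * μ + algebraMap _ K (f.coeff 1)) ^ 2 = 1 := by
      linear_combination 4 * hroot + hdisc
    have hb : algebraMap _ K (f.coeff 1) ∈
        (algebraMap (FractionRing (MvPolynomial (Fin n) ℤ)) K).range :=
      ⟨algebraMap _ _ (f.coeff 1), (IsScalarTower.algebraMap_apply _ _ _ _).symm⟩
    obtain ⟨b, hb⟩ := hb
    rw [← hb] at hsq
    rcases sq_eq_sq_iff_eq_or_eq_neg.mp (hsq.trans (one_pow 2).symm) with h | h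
    · refine ⟨(1 - b) / 2, ?_⟩
      rw [map_div₀, map_sub, map_one, map_ofNat, ← h]
      ring
    · refine ⟨(-1 - b) / 2, ?_⟩
      rw [map_div₀, map_sub, map_neg, map_one, map_ofNat, ← h]
      ring
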